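/- Let $A$ be an $m\times m$ matrix with real entries, $m\ge 1$; its eigenvalues are the roots of its characteristic polynomial over $\mathbb{C}$. For an eigenvalue $\mu_j$ of $A$, $n\in\mathbb{Z}$ and $t\in(-1,1]$ put $\mu_{n,j}(t)=(2n+t)^2+\mu_j$. Let $\mu_j$ and $\mu_i$ be real eigenvalues of $A$, let $k$ be a positive integer, let $\delta>0$, and let $t\in(-1,1]$. Define $$U(j,k,i,-k,\delta)=\left(\frac{\mu_i-\mu_j-\delta}{8k},\ \frac{\mu_i-\mu_j+\delta}{8k}\right),$$ $$U(j,k,i,-k-1,\delta)=\left(1+\frac{\mu_i-\mu_j-\delta}{4(2k+1)},\ 1+\frac{\mu_i-\mu_j+\delta}{4(2k+1)}\right),$$ $$U(j,k,i,-k+1,\delta)=\left(-1+\frac{\mu_i-\mu_j-\delta}{4(2k-1)},\ -1+\frac{\mu_i-\mu_j+\delta}{4(2k-1)}\right).$$ If $t\notin U(j,k,i,-k,\delta)$ then $|\mu_{k,j}(t)-\mu_{-k,i}(t)|\ge\delta$; if $t\notin U(j,k,i,-k-1,\delta)$ then $|\mu_{k,j}(t)-\mu_{-k-1,i}(t)|\ge\delta$;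 and if $t\notin U(j,k,i,-k+1,\delta)$ then $|\mu_{k,j}(t)-\mu_{-k+1,i}(t)|\ge\delta$. Consequently, for $\varepsilon,\varepsilon'>0$ with $\varepsilon+\varepsilon'\le\delta$ and $n\in\{-k,-k-1,-k+1\}$, the closed disks $\{z\in\mathbb{C}:|z-\mu_{k,j}(t)|\le\varepsilon\}$ and $\{z\in\mathbb{C}:|z-\mu_{n,i}(t)|\le\varepsilon'\}$ are disjoint whenever $t\notin U(j,k,i,n,\delta)$, except possibly when $\varepsilon+\varepsilon'=\delta$ and $t$ is an endpoint of $U(j,k,i,n,\delta)$. Moreover, if $\mu_l$ is a nonreal eigenvalue of $A$ with $\delta<|\operatorname{Im}\mu_l|$, then for every $n\in\mathbb{Z}$, every $t\in(-1,1]$ and all $\varepsilon,\varepsilon'>0$ with $\varepsilon+\varepsilon'\le\delta$, the closed disks $\{z\in\mathbb{C}:|z-\mu_{k,j}(t)|\le\varepsilon\}$ and $\{z\in\mathbb{C}:|z-((2n+t)^2+\mu_l)|\le\varepsilon'\}$ are disjoint. -/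

import Mathlib

/-- `μ ∈ ℂ` is an eigenvalue of the real matrix `A`, i.e. a root of its characteristic
polynomial over `ℂ`. -/
def IsEigOfReal {m : ℕ} (A : Matrix (Fin m) (Fin m) ℝ) (μ : ℂ) : Prop :=
  (A.map Complex.ofReal).charpoly.IsRoot μ

/-- `μ_n(t) = (2n+t)² + μ`. -/
noncomputable def bandValue (n : ℤ) (μ : ℂ) (t : ℝ) : ℂ :=
  (2 * (n : ℂ) + (t : ℂ)) ^ 2 + μ

/-- The open interval `U(j,k,i,-k,δ)`. -/
noncomputable def excNeg (μj μi : ℝ) (k : ℤ) (δ : ℝ) : Set ℝ :=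
  Set.Ioo ((μi - μj - δ) / (8 * (k : ℝ))) ((μi - μj + δ) / (8 * (k : ℝ)))

/-- The open interval `U(j,k,i,-k-1,δ)`. -/
noncomputable def excNegSubOne (μj μi : ℝ) (k : ℤ) (δ : ℝ) : Set ℝ :=
  Set.Ioo (1 + (μi - μj - δ) / (4 * (2 * (k : ℝ) + 1)))
    (1 + (μi - μj + δ) / (4 * (2 * (k : ℝ) + 1)))

/-- The open interval `U(j,k,i,-k+1,δ)`. -/
noncomputable def excNegAddOne (μj μi : ℝ) (k : ℤ) (δ : ℝ) : Set ℝ :=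
  Set.Ioo (-1 + (μi - μj - δ) / (4 * (2 * (k : ℝ) - 1)))
    (-1 + (μi - μj + δ) / (4 * (2 * (k : ℝ) - 1)))

/-- The difference of two band values with real `μ`, `ν`. -/
theorem bandValue_sub_bandValue (n p : ℤ) (μ ν t : ℝ) :
    bandValue n μ t - bandValue p ν t =
      ((4 * ((n : ℝ) - p) * (n + p + t) - (ν - μ) : ℝ) : ℂ) := by
  simp only [bandValue]
  push_cast
  ring

theorem mem_Ioo_add_div_iff {a c d δ t : ℝ} (hc : 0 < c) :
    t ∈ Set.Ioo (a + (d - δ) / c) (a + (d + δ) / c) ↔ |c * (t - a) - d| < δ := by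
  rw [Set.mem_Ioo, ← lt_sub_iff_add_lt', ← sub_lt_iff_lt_add', div_lt_iff₀ hc, lt_div_iff₀ hc,
    abs_lt, mul_comm c]
  constructor <;> rintro ⟨h₁, h₂⟩ <;> constructor <;> linarith

theorem mem_Icc_add_div_iff {a c d δ t : ℝ} (hc : 0 < c) :
    t ∈ Set.Icc (a + (d - δ) / c) (a + (d + δ) / c) ↔ |c * (t - a) - d| ≤ δ := by
  rw [Set.mem_Icc, ← le_sub_iff_add_le', ← sub_le_iff_le_add', div_le_iff₀ hc, le_div_iff₀ hc,
    abs_le, mul_comm c]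
  constructor <;> rintro ⟨h₁, h₂⟩ <;> constructor <;> linarith

theorem mem_closure_Ioo_add_div_iff {a c d δ t : ℝ} (hc : 0 < c) (hδ : 0 < δ) :
    t ∈ closure (Set.Ioo (a + (d - δ) / c) (a + (d + δ) / c)) ↔ |c * (t - a) - d| ≤ δ := by
  have hlt : a + (d - δ) / c < a + (d + δ) / c := by
    gcongr
    linarith
  rw [closure_Ioo hlt.ne, mem_Icc_add_div_iff hc]

/-- If `‖x - y‖ = |c (t - a) - d|`, then `x` and `y` are `δ`-separated, and closed disks around them
with radii of sum at most `δ` are disjoint, as soon as `t` avoids the interval of radius `δ / c`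
around `a + d / c` (and its endpoints, when the radii add up to `δ`). -/
theorem separation_of_notMem_Ioo {x y : ℂ} {a c d δ t : ℝ} (hc : 0 < c) (hδ : 0 < δ)
    (hxy : ‖x - y‖ = |c * (t - a) - d|) {U : Set ℝ}
    (hU : U = Set.Ioo (a + (d - δ) / c) (a + (d + δ) / c)) :
    (t ∉ U → δ ≤ ‖x - y‖) ∧
      ∀ ε ε' : ℝ, ε + ε' ≤ δ → t ∉ U → (ε + ε' < δ ∨ t ∉ closure U) →
        Disjoint (Metric.closedBall x ε) (Metric.closedBall y ε') := by
  subst hU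
  rw [mem_Ioo_add_div_iff hc, mem_closure_Ioo_add_div_iff hc hδ, ← hxy, not_lt, not_le]
  refine ⟨id, fun ε ε' hε h h' => Metric.closedBall_disjoint_closedBall ?_⟩
  rw [dist_eq_norm]
  exact h'.elim (fun h' => h'.trans_le h) (fun h' => hε.trans_lt h')

/-- Band values of a real `μ` and a complex `ν` are at least `|ν.im|` apart. -/
theorem abs_im_le_dist_bandValue (n p : ℤ) (μ t : ℝ) (ν : ℂ) :
    |ν.im| ≤ dist (bandValue n μ t) (bandValue p ν t) := by
  have him : (bandValue n μ t - bandValue p ν t).im = -ν.im := by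
    simp [bandValue, pow_two]
  rw [dist_eq_norm, ← abs_neg, ← him]
  exact Complex.abs_im_le_norm _

/-- Separation of `μ_{k,j}(t)` from `μ_{n,i}(t)`, `n ∈ {-k, -k-1, -k+1}`, when `t` avoids the
exceptional interval, and disjointness of the corresponding closed disks. The only case left out
of the disk claim is `ε + ε' = δ` with `t` an endpoint of the interval, where the two closed disks
are tangent. The last clause concerns the disks around `(2n+t)² + μ'` for nonreal eigenvalues
`μ'`. -/
theorem statement12 {m : ℕ} (hm : 1 ≤ m) (A : Matrix (Fin m) (Fin m) ℝ)
    (μj : ℝ) (hμj : IsEigOfReal A (μj : ℂ))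
    (k : ℤ) (hk : 0 < k) (δ : ℝ) (hδ : 0 < δ)
    (t : ℝ) (ht : t ∈ Set.Ioc (-1 : ℝ) 1) :
    (∀ μi : ℝ, IsEigOfReal A (μi : ℂ) →
      ((t ∉ excNeg μj μi k δ →
          δ ≤ ‖bandValue k μj t - bandValue (-k) μi t‖) ∧
        (t ∉ excNegSubOne μj μi k δ →
          δ ≤ ‖bandValue k μj t - bandValue (-k - 1) μi t‖) ∧
        (t ∉ excNegAddOne μj μi k δ →
          δ ≤ ‖bandValue k μj t - bandValue (-k + 1) μi t‖)) ∧
      (∀ ε ε' : ℝ, 0 < ε → 0 < ε' → ε + ε' ≤ δ →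
        (t ∉ excNeg μj μi k δ → (ε + ε' < δ ∨ t ∉ closure (excNeg μj μi k δ)) →
          Disjoint (Metric.closedBall (bandValue k μj t) ε)
            (Metric.closedBall (bandValue (-k) μi t) ε')) ∧
        (t ∉ excNegSubOne μj μi k δ → (ε + ε' < δ ∨ t ∉ closure (excNegSubOne μj μi k δ)) →
          Disjoint (Metric.closedBall (bandValue k μj t) ε)
            (Metric.closedBall (bandValue (-k - 1) μi t) ε')) ∧
        (t ∉ excNegAddOne μj μi k δ → (ε + ε' < δ ∨ t ∉ closure (excNegAddOne μj μi k δ)) →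
          Disjoint (Metric.closedBall (bandValue k μj t) ε)
            (Metric.closedBall (bandValue (-k + 1) μi t) ε')))) ∧
    (∀ μ' : ℂ, IsEigOfReal A μ' → μ'.im ≠ 0 → δ < |μ'.im| →
      ∀ ε ε' : ℝ, 0 < ε → 0 < ε' → ε + ε' ≤ δ → ∀ n : ℤ,
        Disjoint (Metric.closedBall (bandValue k μj t) ε)
          (Metric.closedBall (bandValue n μ' t) ε')) := by
  have hk' : (1 : ℝ) ≤ k := by exact_mod_cast hk
  refine ⟨fun μi _ => ?_, fun μ' _ _ hμ' ε ε' _ _ hε n =>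
    Metric.closedBall_disjoint_closedBall
      ((hε.trans_lt hμ').trans_le (abs_im_le_dist_bandValue k n μj t μ'))⟩
  obtain ⟨h₁, h₁'⟩ := separation_of_notMem_Ioo (x := bandValue k μj t) (y := bandValue (-k) μi t)
    (a := 0) (c := 8 * (k : ℝ)) (d := μi - μj) (t := t) (U := excNeg μj μi k δ)
    (by linarith) hδ
    (by
      rw [bandValue_sub_bandValue, Complex.norm_real, Real.norm_eq_abs]
      push_cast
      ring_nf)
    (by simp only [excNeg, zero_add])
  obtain ⟨h₂, h₂'⟩ := separation_of_notMem_Ioo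
    (x := bandValue k μj t) (y := bandValue (-k - 1) μi t)
    (a := 1) (c := 4 * (2 * (k : ℝ) + 1)) (d := μi - μj) (t := t) (U := excNegSubOne μj μi k δ)
    (by linarith) hδ
    (by
      rw [bandValue_sub_bandValue, Complex.norm_real, Real.norm_eq_abs]
      push_cast
      ring_nf)
    rfl
  obtain ⟨h₃, h₃'⟩ := separation_of_notMem_Ioo
    (x := bandValue k μj t) (y := bandValue (-k + 1) μi t)
    (a := -1) (c := 4 * (2 * (k : ℝ) - 1)) (d := μi - μj) (t := t) (U := excNegAddOne μj μi k δ)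
    (by linarith) hδ
    (by
      rw [bandValue_sub_bandValue, Complex.norm_real, Real.norm_eq_abs]
      push_cast
      ring_nf)
    rfl
  exact ⟨⟨h₁, h₂, h₃⟩, fun ε ε' _ _ hε => ⟨h₁' ε ε' hε, h₂' ε ε' hε, h₃' ε ε' hε⟩⟩
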